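/- Let A : Ω → ℝ^{d×d} assign to each state a symmetric positive semidefinite matrix, let Σ := Σ_{x∈Ω} π(x)·A(x) and λ_1 := ‖Σ‖_2, and assume ‖A(x) − Σ‖_2 ≤ ℳ for every x and ‖ Σ_{x∈Ω} π(x)·(A(x) − Σ)² ‖_2 ≤ 𝒱. Let ρ ≥ 0 be such that ‖S_P u‖_2 ≤ ρ·‖u‖_2 for every u ∈ ℝ^{Ω} with Σ_x √(π(x))·u(x) = 0, where S_P(x,y) := √(π(x))·P(x,y)/√(π(y)). For integers a ≥ 1 and b ≥ 0 set δ_t := sup_{x∈Ω} (1/2)·Σ_{y∈Ω} |(P^t)(x,y) − π(y)|. Then for every x_0 ∈ Ω and every symmetric positive semidefinite S ∈ ℝ^{d×d}: ‖ Σ_{x,y∈Ω} (P^a)(y,x)·(P^b)(x_0,y)·(A(x) − Σ)·S·A(y) ‖_2 ≤ ( ρ^a·𝒱 + 2·ℳ·λ_1·δ_{a+b} + 4·ℳ²·δ_a·δ_b )·‖S‖_2. -/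

import Mathlib

/-!
With `B x = A x - Σ` one has `∑ x, π x • B x = 0`. Splitting `A y = Σ + B y` and
`P^b(x₀,y) = π y + e y`, and using this centring twice, the sum becomes

* `∑ₓ (P^(a+b)(x₀,x) - π x) • B x S Σ`, bounded by `2 ℳ λ₁ δ_{a+b} ‖S‖`,
* `∑ₓᵧ (P^b(x₀,y) - π y) (P^a(y,x) - π x) • B x S B y`, bounded by `4 ℳ² δ_a δ_b ‖S‖`,
* the stationary term `∑ₓᵧ π y P^a(y,x) • B x S B y`.

In the last one, `π y P^a(y,x) = √π y · Q^a(y,x) · √π x` with `Q` the symmetrized transition matrix.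
Its bilinear form at `v, w` is therefore `∑ₓᵧ Q^a(y,x) ⟨f x, g y⟩` with `f x = √π x B x v` and
`g y = √π y S B y w`. Every coordinate of `f` is orthogonal to `√π`, a subspace that `Q` preserves
and contracts by `ρ`, so Cauchy–Schwarz gives `ρ^a ‖f‖ ‖g‖` (`pairing_le`), while
`‖f‖² = ⟨v, (∑ π B²) v⟩ ≤ 𝒱 ‖v‖²` and likewise `‖g‖² ≤ ‖S‖² 𝒱 ‖w‖²`.
-/

set_option autoImplicit false

open Matrix

/-- Euclidean (ℓ₂) norm of a finite real vector. -/
noncomputable def euclNorm {ι : Type*} [Fintype ι] (v : ι → ℝ) : ℝ :=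
  Real.sqrt (∑ i, v i ^ 2)

/-- Spectral (ℓ₂ operator) norm of a real matrix: the supremum of `‖M v‖₂` over
unit vectors `v`. -/
noncomputable def specNorm {ι κ : Type*} [Fintype ι] [Fintype κ] (M : Matrix ι κ ℝ) : ℝ :=
  sSup {r : ℝ | ∃ v : κ → ℝ, euclNorm v = 1 ∧ r = euclNorm (M.mulVec v)}

/-- The symmetrized transition matrix `S_P(x,y) = √π(x)·P(x,y)/√π(y)`. -/
noncomputable def symTrans {S : Type*} (P : Matrix S S ℝ) (pi' : S → ℝ) : Matrix S S ℝ :=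
  Matrix.of fun x y => Real.sqrt (pi' x) * P x y / Real.sqrt (pi' y)

/-- Distance from stationarity at time `t`:
`δ_t = sup_{x∈Ω} (1/2) Σ_y |(P^t)(x,y) − π(y)|`. -/
noncomputable def dmix {S : Type*} [Fintype S] [DecidableEq S]
    (P : Matrix S S ℝ) (pi' : S → ℝ) (t : ℕ) : ℝ :=
  ⨆ x : S, (1 / 2) * ∑ y, |(P ^ t) x y - pi' y|

/-! ### The Euclidean norm -/

section Euclidean

variable {ι : Type*} [Fintype ι]

lemma euclNorm_nonneg (v : ι → ℝ) : 0 ≤ euclNorm v := Real.sqrt_nonneg _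

lemma euclNorm_sq (v : ι → ℝ) : euclNorm v ^ 2 = ∑ i, v i ^ 2 :=
  Real.sq_sqrt (Finset.sum_nonneg fun _ _ => sq_nonneg _)

lemma euclNorm_sq_eq_dotProduct (v : ι → ℝ) : euclNorm v ^ 2 = v ⬝ᵥ v := by
  rw [euclNorm_sq]
  exact Finset.sum_congr rfl fun _ _ => sq _

lemma euclNorm_eq_norm (v : ι → ℝ) : euclNorm v = ‖WithLp.toLp 2 v‖ := by
  simp [euclNorm, EuclideanSpace.norm_eq]

lemma sum_mul_le_euclNorm (v w : ι → ℝ) : ∑ i, v i * w i ≤ euclNorm v * euclNorm w :=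
  Real.sum_mul_le_sqrt_mul_sqrt _ _ _

end Euclidean

/-! ### Reversible chains -/

section Chain

variable {S : Type*} [Fintype S] {P : Matrix S S ℝ} {p : S → ℝ}

/-- The orthogonal complement of `√π` is invariant under the symmetrized transition matrix, because
`π` is stationary. -/
lemma symTrans_mulVec_orthogonal (hpos : ∀ x, 0 < p x) (hP1 : ∀ x, ∑ y, P x y = 1)
    (hrev : ∀ x y, p x * P x y = p y * P y x) {u : S → ℝ}
    (hu : ∑ x, Real.sqrt (p x) * u x = 0) :
    ∑ x, Real.sqrt (p x) * (symTrans P p).mulVec u x = 0 := by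
  rw [← hu]
  simp only [Matrix.mulVec, dotProduct, Finset.mul_sum]
  rw [Finset.sum_comm]
  refine Finset.sum_congr rfl fun y _ => ?_
  have hy := Real.sqrt_pos.2 (hpos y)
  have hyy := Real.mul_self_sqrt (hpos y).le
  calc ∑ x, Real.sqrt (p x) * (symTrans P p x y * u y)
      = ∑ x, P y x * (Real.sqrt (p y) * u y) := by
        refine Finset.sum_congr rfl fun x _ => ?_
        have hxx := Real.mul_self_sqrt (hpos x).le
        simp only [symTrans, Matrix.of_apply]
        have h := hrev x y
        rw [← hxx, ← hyy] at h
        field_simp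
        linear_combination u y * h
    _ = Real.sqrt (p y) * u y := by rw [← Finset.sum_mul, hP1, one_mul]

/-- A matrix `R` that contracts `√π^⊥` by `K` still does so for vector-valued functions, by applying
the scalar bound to each coordinate. -/
lemma pairing_le {ι : Type*} [Fintype ι] (R : Matrix S S ℝ) {K : ℝ} (hK : 0 ≤ K)
    (hR : ∀ u : S → ℝ, (∑ x, Real.sqrt (p x) * u x) = 0 →
      euclNorm (R.mulVec u) ≤ K * euclNorm u)
    (f g : S → ι → ℝ) (hf : ∀ i, ∑ x, Real.sqrt (p x) * f x i = 0) :
    ∑ x, ∑ y, R y x * (f x ⬝ᵥ g y) ≤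
      K * (Real.sqrt (∑ x, euclNorm (f x) ^ 2) * Real.sqrt (∑ y, euclNorm (g y) ^ 2)) := by
  have swap : ∀ h : S → ι → ℝ,
      ∑ x, euclNorm (h x) ^ 2 = ∑ i, euclNorm (fun x => h x i) ^ 2 := fun h => by
    simp only [euclNorm_sq]
    exact Finset.sum_comm
  calc ∑ x, ∑ y, R y x * (f x ⬝ᵥ g y)
      = ∑ i, ∑ y, R.mulVec (fun x => f x i) y * g y i := by
        simp only [Matrix.mulVec, dotProduct, Finset.mul_sum, Finset.sum_mul]
        rw [Finset.sum_comm' (t' := Finset.univ) (s' := fun _ => Finset.univ) (by simp)]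
        rw [Finset.sum_comm (s := (Finset.univ : Finset ι))]
        refine Finset.sum_congr rfl fun y _ => ?_
        rw [Finset.sum_comm]
        refine Finset.sum_congr rfl fun i _ => Finset.sum_congr rfl fun x _ => by ring
    _ ≤ ∑ i, K * (euclNorm (fun x => f x i) * euclNorm (fun y => g y i)) := by
        refine Finset.sum_le_sum fun i _ => (sum_mul_le_euclNorm _ _).trans ?_
        rw [← mul_assoc]
        exact mul_le_mul_of_nonneg_right (hR _ (hf i)) (euclNorm_nonneg _)
    _ ≤ _ := by
        rw [← Finset.mul_sum, swap f, swap g]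
        exact mul_le_mul_of_nonneg_left (Real.sum_mul_le_sqrt_mul_sqrt _ _ _) hK

variable [DecidableEq S]

lemma symTrans_pow_apply (hpos : ∀ x, 0 < p x) (n : ℕ) (x y : S) :
    (symTrans P p ^ n) x y = Real.sqrt (p x) * (P ^ n) x y / Real.sqrt (p y) := by
  induction n generalizing x y with
  | zero =>
    have := (Real.sqrt_pos.2 (hpos y)).ne'
    by_cases h : x = y
    · subst h; simp [this]
    · simp [h]
  | succ n ih =>
    rw [pow_succ, pow_succ, Matrix.mul_apply, Matrix.mul_apply, Finset.mul_sum, Finset.sum_div]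
    refine Finset.sum_congr rfl fun z _ => ?_
    have := (Real.sqrt_pos.2 (hpos z)).ne'
    rw [ih]
    simp only [symTrans, Matrix.of_apply]
    field_simp

lemma symTrans_pow_contract (hpos : ∀ x, 0 < p x) (hP1 : ∀ x, ∑ y, P x y = 1)
    (hrev : ∀ x y, p x * P x y = p y * P y x) {ρ : ℝ} (hρ0 : 0 ≤ ρ)
    (hρ : ∀ u : S → ℝ, (∑ x, Real.sqrt (p x) * u x) = 0 →
      euclNorm ((symTrans P p).mulVec u) ≤ ρ * euclNorm u)
    (n : ℕ) {u : S → ℝ} (hu : ∑ x, Real.sqrt (p x) * u x = 0) :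
    (∑ x, Real.sqrt (p x) * (symTrans P p ^ n).mulVec u x = 0) ∧
      euclNorm ((symTrans P p ^ n).mulVec u) ≤ ρ ^ n * euclNorm u := by
  induction n with
  | zero => simpa using hu
  | succ n ih =>
    rw [pow_succ', ← Matrix.mulVec_mulVec]
    refine ⟨symTrans_mulVec_orthogonal hpos hP1 hrev ih.1, (hρ _ ih.1).trans ?_⟩
    rw [pow_succ', mul_assoc]
    exact mul_le_mul_of_nonneg_left ih.2 hρ0

lemma sum_abs_le_dmix (P : Matrix S S ℝ) (p : S → ℝ) (t : ℕ) (x : S) :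
    ∑ y, |(P ^ t) x y - p y| ≤ 2 * dmix P p t := by
  have : (1 / 2 : ℝ) * ∑ y, |(P ^ t) x y - p y| ≤ dmix P p t :=
    le_ciSup (f := fun x : S => (1 / 2 : ℝ) * ∑ y, |(P ^ t) x y - p y|)
      (Set.finite_range _).bddAbove x
  linarith

end Chain

/-! ### Operator norm bounds -/

section L2

open scoped Matrix.Norms.L2Operator

variable {d : ℕ}

lemma euclNorm_mulVec_le (M : Matrix (Fin d) (Fin d) ℝ) (v : Fin d → ℝ) :
    euclNorm (M.mulVec v) ≤ ‖M‖ * euclNorm v := by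
  rw [euclNorm_eq_norm, euclNorm_eq_norm]
  exact Matrix.l2_opNorm_mulVec M (WithLp.toLp 2 v)

lemma l2_norm_le_of_euclNorm {M : Matrix (Fin d) (Fin d) ℝ} {K : ℝ} (hK : 0 ≤ K)
    (h : ∀ v, euclNorm (M.mulVec v) ≤ K * euclNorm v) : ‖M‖ ≤ K := by
  rw [Matrix.l2_opNorm_def]
  refine ContinuousLinearMap.opNorm_le_bound _ hK fun v => ?_
  have := h v.ofLp
  rw [euclNorm_eq_norm, euclNorm_eq_norm] at this
  exact this

lemma specNorm_eq_norm (M : Matrix (Fin d) (Fin d) ℝ) : specNorm M = ‖M‖ := by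
  have ub : ∀ r ∈ {r : ℝ | ∃ v : Fin d → ℝ, euclNorm v = 1 ∧ r = euclNorm (M.mulVec v)},
      r ≤ ‖M‖ := by
    rintro r ⟨v, hv, rfl⟩
    simpa [hv] using euclNorm_mulVec_le M v
  apply le_antisymm
  · exact Real.sSup_le ub (norm_nonneg _)
  · have h0 : 0 ≤ specNorm M := Real.sSup_nonneg (by
      rintro r ⟨v, -, rfl⟩
      exact euclNorm_nonneg _)
    refine l2_norm_le_of_euclNorm h0 fun v => ?_
    have smul_norm : ∀ (c : ℝ) (w : Fin d → ℝ), euclNorm (c • w) = |c| * euclNorm w := by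
      intro c w
      rw [euclNorm_eq_norm, euclNorm_eq_norm, WithLp.toLp_smul, norm_smul, Real.norm_eq_abs]
    rcases (euclNorm_nonneg v).eq_or_lt with h | h
    · have := euclNorm_mulVec_le M v
      rw [← h, mul_zero] at this ⊢
      exact this
    · have hmem : euclNorm (M.mulVec ((euclNorm v)⁻¹ • v)) ≤ specNorm M :=
        le_csSup ⟨_, ub⟩ ⟨_, by
          rw [smul_norm, abs_of_pos (inv_pos.2 h), inv_mul_cancel₀ h.ne'], rfl⟩
      rw [Matrix.mulVec_smul, smul_norm, abs_of_pos (inv_pos.2 h), inv_mul_le_iff₀ h] at hmem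
      linarith

/-- A bound on the bilinear form of `M` bounds its operator norm (test against `v = M w`). -/
lemma l2_norm_le_of_bilin {M : Matrix (Fin d) (Fin d) ℝ} {K : ℝ} (hK : 0 ≤ K)
    (h : ∀ v w, v ⬝ᵥ M.mulVec w ≤ K * (euclNorm v * euclNorm w)) : ‖M‖ ≤ K := by
  refine l2_norm_le_of_euclNorm hK fun w => ?_
  have := h (M.mulVec w) w
  rw [← euclNorm_sq_eq_dotProduct] at this
  rcases (euclNorm_nonneg (M.mulVec w)).eq_or_lt with h0 | h0
  · rw [← h0]
    exact mul_nonneg hK (euclNorm_nonneg _)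
  · refine le_of_mul_le_mul_left ?_ h0
    linarith

lemma dotProduct_mulVec_le (M : Matrix (Fin d) (Fin d) ℝ) (v : Fin d → ℝ) :
    v ⬝ᵥ M.mulVec v ≤ ‖M‖ * euclNorm v ^ 2 := by
  calc v ⬝ᵥ M.mulVec v ≤ euclNorm v * euclNorm (M.mulVec v) := sum_mul_le_euclNorm _ _
    _ ≤ euclNorm v * (‖M‖ * euclNorm v) :=
        mul_le_mul_of_nonneg_left (euclNorm_mulVec_le M v) (euclNorm_nonneg _)
    _ = _ := by ring

lemma norm_sum_smul_le {S : Type*} [Fintype S] (c : S → ℝ) (M : S → Matrix (Fin d) (Fin d) ℝ)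
    {K : ℝ} (hM : ∀ x, ‖M x‖ ≤ K) : ‖∑ x, c x • M x‖ ≤ (∑ x, |c x|) * K := by
  rw [Finset.sum_mul]
  refine norm_sum_le_of_le _ fun x _ => ?_
  rw [norm_smul, Real.norm_eq_abs]
  exact mul_le_mul_of_nonneg_left (hM x) (abs_nonneg _)

variable {S : Type*} [Fintype S] [DecidableEq S] {P : Matrix S S ℝ} {p : S → ℝ}

/-- The stationary covariance term, governed by the spectral contraction of the chain. -/
lemma stationary_term_le (hpos : ∀ x, 0 < p x) (hP1 : ∀ x, ∑ y, P x y = 1)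
    (hrev : ∀ x y, p x * P x y = p y * P y x) {ρ : ℝ} (hρ0 : 0 ≤ ρ)
    (hρ : ∀ u : S → ℝ, (∑ x, Real.sqrt (p x) * u x) = 0 →
      euclNorm ((symTrans P p).mulVec u) ≤ ρ * euclNorm u)
    (B : S → Matrix (Fin d) (Fin d) ℝ) (hBs : ∀ x, (B x)ᵀ = B x) (hB : ∑ x, p x • B x = 0)
    {𝒱 : ℝ} (hV : ‖∑ x, p x • (B x * B x)‖ ≤ 𝒱) (a : ℕ) (T : Matrix (Fin d) (Fin d) ℝ) :
    ‖∑ x, ∑ y, (p y * (P ^ a) y x) • (B x * T * B y)‖ ≤ ρ ^ a * 𝒱 * ‖T‖ := by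
  have hV0 : 0 ≤ 𝒱 := (norm_nonneg _).trans hV
  have hss : ∀ x, Real.sqrt (p x) * Real.sqrt (p x) = p x := fun x => Real.mul_self_sqrt (hpos x).le
  have second_moment : ∀ v : Fin d → ℝ,
      ∑ x, p x * euclNorm ((B x).mulVec v) ^ 2 ≤ 𝒱 * euclNorm v ^ 2 := by
    intro v
    refine le_trans (le_of_eq ?_) ((dotProduct_mulVec_le (∑ x, p x • (B x * B x)) v).trans
      (mul_le_mul_of_nonneg_right hV (sq_nonneg _)))
    rw [Matrix.sum_mulVec, dotProduct_sum]
    refine Finset.sum_congr rfl fun x _ => ?_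
    rw [Matrix.smul_mulVec, dotProduct_smul, smul_eq_mul, euclNorm_sq_eq_dotProduct,
      ← Matrix.mulVec_mulVec, Matrix.dotProduct_mulVec v, ← Matrix.mulVec_transpose, hBs]
  have smul_sq : ∀ (x : S) (w : Fin d → ℝ),
      euclNorm (Real.sqrt (p x) • w) ^ 2 = p x * euclNorm w ^ 2 := by
    intro x w
    rw [euclNorm_sq_eq_dotProduct, euclNorm_sq_eq_dotProduct, smul_dotProduct, dotProduct_smul,
      smul_eq_mul, smul_eq_mul, ← mul_assoc, hss]
  refine l2_norm_le_of_bilin (by positivity) fun v w => ?_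
  have key := pairing_le (p := p) (symTrans P p ^ a) (pow_nonneg hρ0 a)
    (fun u hu => (symTrans_pow_contract hpos hP1 hrev hρ0 hρ a hu).2)
    (fun x => Real.sqrt (p x) • (B x).mulVec v)
    (fun y => Real.sqrt (p y) • (T * B y).mulVec w) (by
      intro i
      have h := congrFun (congrArg (fun M : Matrix (Fin d) (Fin d) ℝ => M.mulVec v) hB) i
      simp only [Matrix.sum_mulVec, Matrix.smul_mulVec, Finset.sum_apply, Matrix.zero_mulVec,
        Pi.smul_apply, smul_eq_mul, Pi.zero_apply] at h
      rw [← h]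
      refine Finset.sum_congr rfl fun x _ => ?_
      simp only [Pi.smul_apply, smul_eq_mul]
      rw [← mul_assoc, hss])
  have hlhs : v ⬝ᵥ (∑ x, ∑ y, (p y * (P ^ a) y x) • (B x * T * B y)).mulVec w
      = ∑ x, ∑ y, (symTrans P p ^ a) y x *
        ((Real.sqrt (p x) • (B x).mulVec v) ⬝ᵥ (Real.sqrt (p y) • (T * B y).mulVec w)) := by
    simp only [Matrix.sum_mulVec, dotProduct_sum]
    refine Finset.sum_congr rfl fun x _ => Finset.sum_congr rfl fun y _ => ?_
    have hx := (Real.sqrt_pos.2 (hpos x)).ne'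
    rw [Matrix.smul_mulVec, dotProduct_smul, smul_dotProduct, dotProduct_smul,
      symTrans_pow_apply hpos, Matrix.mul_assoc, ← Matrix.mulVec_mulVec w (B x),
      Matrix.dotProduct_mulVec v, ← Matrix.mulVec_transpose, hBs, smul_eq_mul, smul_eq_mul,
      smul_eq_mul]
    conv_lhs => rw [← hss y]
    field_simp
  rw [hlhs]
  refine key.trans ?_
  simp only [smul_sq]
  have hF : Real.sqrt (∑ x, p x * euclNorm ((B x).mulVec v) ^ 2)
      ≤ Real.sqrt 𝒱 * euclNorm v := by
    refine Real.sqrt_le_iff.2 ⟨mul_nonneg (Real.sqrt_nonneg _) (euclNorm_nonneg _), ?_⟩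
    rw [mul_pow, Real.sq_sqrt hV0]
    exact second_moment v
  have hG : Real.sqrt (∑ y, p y * euclNorm ((T * B y).mulVec w) ^ 2)
      ≤ ‖T‖ * (Real.sqrt 𝒱 * euclNorm w) := by
    refine Real.sqrt_le_iff.2 ⟨mul_nonneg (norm_nonneg _)
      (mul_nonneg (Real.sqrt_nonneg _) (euclNorm_nonneg _)), ?_⟩
    rw [mul_pow, mul_pow, Real.sq_sqrt hV0]
    refine le_trans ?_ (mul_le_mul_of_nonneg_left (second_moment w) (sq_nonneg ‖T‖))
    rw [Finset.mul_sum]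
    refine Finset.sum_le_sum fun y _ => ?_
    rw [mul_left_comm, ← mul_pow, ← Matrix.mulVec_mulVec]
    exact mul_le_mul_of_nonneg_left
      (pow_le_pow_left₀ (euclNorm_nonneg _) (euclNorm_mulVec_le _ _) 2) (hpos y).le
  calc _ ≤ ρ ^ a * ((Real.sqrt 𝒱 * euclNorm v) * (‖T‖ * (Real.sqrt 𝒱 * euclNorm w))) :=
        mul_le_mul_of_nonneg_left (mul_le_mul hF hG (Real.sqrt_nonneg _)
          (mul_nonneg (Real.sqrt_nonneg _) (euclNorm_nonneg _))) (pow_nonneg hρ0 a)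
    _ = ρ ^ a * (Real.sqrt 𝒱 * Real.sqrt 𝒱) * ‖T‖ * (euclNorm v * euclNorm w) := by ring
    _ = _ := by rw [Real.mul_self_sqrt hV0]

/-- Splitting of the weighted sum into its stationary part and two mixing errors. -/
lemma weighted_sum_decomp (B : S → Matrix (Fin d) (Fin d) ℝ) (hB : ∑ x, p x • B x = 0)
    (T Sig : Matrix (Fin d) (Fin d) ℝ) (a b : ℕ) (x₀ : S) :
    ∑ x, ∑ y, ((P ^ a) y x * (P ^ b) x₀ y) • (B x * T * (Sig + B y)) =
      ∑ x, ∑ y, (p y * (P ^ a) y x) • (B x * T * B y)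
      + ∑ x, ((P ^ (a + b)) x₀ x - p x) • (B x * T * Sig)
      + ∑ y, ((P ^ b) x₀ y - p y) • ∑ x, ((P ^ a) y x - p x) • (B x * T * B y) := by
  have hz : ∀ N : Matrix (Fin d) (Fin d) ℝ, ∑ x, p x • (B x * T * N) = 0 := by
    intro N
    simp only [Matrix.mul_assoc, ← Matrix.smul_mul]
    rw [← Matrix.sum_mul, hB, Matrix.zero_mul]
  have h1 : ∑ x, ((P ^ (a + b)) x₀ x - p x) • (B x * T * Sig)
      = ∑ x, ∑ y, ((P ^ a) y x * (P ^ b) x₀ y) • (B x * T * Sig) := by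
    simp only [sub_smul, Finset.sum_sub_distrib, hz, sub_zero]
    refine Finset.sum_congr rfl fun x _ => ?_
    rw [add_comm a b, pow_add, Matrix.mul_apply, Finset.sum_smul]
    simp only [mul_comm]
  have h2 : ∑ y, ((P ^ b) x₀ y - p y) • ∑ x, ((P ^ a) y x - p x) • (B x * T * B y)
      = ∑ x, ∑ y, (((P ^ b) x₀ y - p y) * (P ^ a) y x) • (B x * T * B y) := by
    rw [Finset.sum_comm]
    refine Finset.sum_congr rfl fun y _ => ?_
    simp only [sub_smul ((P ^ a) _ _), Finset.sum_sub_distrib, hz, sub_zero, Finset.smul_sum,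
      smul_smul]
  rw [h1, h2, ← Finset.sum_add_distrib, ← Finset.sum_add_distrib]
  refine Finset.sum_congr rfl fun x _ => ?_
  rw [← Finset.sum_add_distrib, ← Finset.sum_add_distrib]
  refine Finset.sum_congr rfl fun y _ => ?_
  rw [Matrix.mul_add]
  module

/-- The bound for a centred symmetric family `B`, with an arbitrary middle matrix `T`. -/
lemma weighted_sum_le (hpos : ∀ x, 0 < p x) (hP1 : ∀ x, ∑ y, P x y = 1)
    (hrev : ∀ x y, p x * P x y = p y * P y x) {ρ : ℝ} (hρ0 : 0 ≤ ρ)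
    (hρ : ∀ u : S → ℝ, (∑ x, Real.sqrt (p x) * u x) = 0 →
      euclNorm ((symTrans P p).mulVec u) ≤ ρ * euclNorm u)
    (B : S → Matrix (Fin d) (Fin d) ℝ) (hBs : ∀ x, (B x)ᵀ = B x) (hB : ∑ x, p x • B x = 0)
    {ℳ 𝒱 : ℝ} (hM : ∀ x, ‖B x‖ ≤ ℳ) (hV : ‖∑ x, p x • (B x * B x)‖ ≤ 𝒱)
    (T Sig : Matrix (Fin d) (Fin d) ℝ) (a b : ℕ) (x₀ : S) :
    ‖∑ x, ∑ y, ((P ^ a) y x * (P ^ b) x₀ y) • (B x * T * (Sig + B y))‖ ≤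
      (ρ ^ a * 𝒱 + 2 * ℳ * ‖Sig‖ * dmix P p (a + b)
          + 4 * ℳ ^ 2 * dmix P p a * dmix P p b) * ‖T‖ := by
  have hM0 : 0 ≤ ℳ := (norm_nonneg _).trans (hM x₀)
  have hprod : ∀ x (N : Matrix (Fin d) (Fin d) ℝ), ‖B x * T * N‖ ≤ ℳ * ‖T‖ * ‖N‖ := fun x N =>
    (norm_mul_le _ _).trans (mul_le_mul_of_nonneg_right ((norm_mul_le _ _).trans
      (mul_le_mul_of_nonneg_right (hM x) (norm_nonneg _))) (norm_nonneg _))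
  have hδ : ∀ t, 0 ≤ dmix P p t := fun t => by
    have := (Finset.sum_nonneg fun y _ => abs_nonneg _).trans (sum_abs_le_dmix P p t x₀)
    linarith
  have t1 := stationary_term_le hpos hP1 hrev hρ0 hρ B hBs hB hV a T
  have t2 : ‖∑ x, ((P ^ (a + b)) x₀ x - p x) • (B x * T * Sig)‖
      ≤ 2 * dmix P p (a + b) * (ℳ * ‖T‖ * ‖Sig‖) :=
    (norm_sum_smul_le _ _ fun x => hprod x Sig).trans
      (mul_le_mul_of_nonneg_right (sum_abs_le_dmix P p _ x₀) (by positivity))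
  have t3 : ‖∑ y, ((P ^ b) x₀ y - p y) • ∑ x, ((P ^ a) y x - p x) • (B x * T * B y)‖
      ≤ 2 * dmix P p b * (2 * dmix P p a * (ℳ * ‖T‖ * ℳ)) := by
    refine (norm_sum_smul_le (K := 2 * dmix P p a * (ℳ * ‖T‖ * ℳ)) _ _ fun y => ?_).trans
      (mul_le_mul_of_nonneg_right (sum_abs_le_dmix P p _ x₀) ?_)
    · exact (norm_sum_smul_le _ _ fun x => (hprod x (B y)).trans
        (mul_le_mul_of_nonneg_left (hM y) (by positivity))).trans
        (mul_le_mul_of_nonneg_right (sum_abs_le_dmix P p _ y) (by positivity))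
    · have := hδ a
      positivity
  rw [weighted_sum_decomp B hB]
  refine (norm_add₃_le).trans ((add_le_add (add_le_add t1 t2) t3).trans (le_of_eq ?_))
  ring

end L2

/-- for a state-indexed family `A` of symmetric PSD matrices with
`Σ = Σ_x π(x)A(x)`, `λ₁ = ‖Σ‖₂`, `‖A(x)−Σ‖₂ ≤ ℳ`, `‖Σ_x π(x)(A(x)−Σ)²‖₂ ≤ 𝒱` and `ρ`
dominating `S_P` on `(√π)^⊥`, for all integers `a ≥ 1`, `b ≥ 0`, every `x₀` and every
symmetric PSD `S`:
`‖ Σ_{x,y} (P^a)(y,x)·(P^b)(x₀,y)·(A(x)−Σ)·S·A(y) ‖₂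
  ≤ (ρ^a·𝒱 + 2ℳλ₁·δ_{a+b} + 4ℳ²·δ_a·δ_b)·‖S‖₂`. -/
theorem covariance_weighted_bound {S : Type*} [Fintype S] [DecidableEq S] [Nonempty S]
    {d : ℕ} (P : Matrix S S ℝ) (pi' : S → ℝ)
    (hP0 : ∀ x y, 0 ≤ P x y) (hP1 : ∀ x, ∑ y, P x y = 1)
    (hpos : ∀ x, 0 < pi' x) (hsum : ∑ x, pi' x = 1)
    (hrev : ∀ x y, pi' x * P x y = pi' y * P y x)
    (A : S → Matrix (Fin d) (Fin d) ℝ) (hA : ∀ x, (A x).PosSemidef)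
    (Sig : Matrix (Fin d) (Fin d) ℝ) (hSig : Sig = ∑ x, pi' x • A x)
    (lam1 : ℝ) (hlam1 : lam1 = specNorm Sig)
    (ℳ 𝒱 : ℝ)
    (hM : ∀ x, specNorm (A x - Sig) ≤ ℳ)
    (hV : specNorm (∑ x, pi' x • ((A x - Sig) * (A x - Sig))) ≤ 𝒱)
    (ρ : ℝ) (hρ0 : 0 ≤ ρ)
    (hρ : ∀ u : S → ℝ, (∑ x, Real.sqrt (pi' x) * u x) = 0 →
      euclNorm ((symTrans P pi').mulVec u) ≤ ρ * euclNorm u)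
    (a b : ℕ) (ha : 1 ≤ a)
    (x₀ : S) (Smat : Matrix (Fin d) (Fin d) ℝ) (hSmat : Smat.PosSemidef) :
    specNorm (∑ x, ∑ y, ((P ^ a) y x * (P ^ b) x₀ y) • ((A x - Sig) * Smat * A y))
      ≤ (ρ ^ a * 𝒱 + 2 * ℳ * lam1 * dmix P pi' (a + b)
          + 4 * ℳ ^ 2 * dmix P pi' a * dmix P pi' b) * specNorm Smat := by
  have hB : ∑ x, pi' x • (A x - Sig) = 0 := by
    simp only [smul_sub, Finset.sum_sub_distrib]
    rw [← Finset.sum_smul, hsum, one_smul, ← hSig, sub_self]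
  have hAs : ∀ x, (A x)ᵀ = A x := fun x => by
    simpa [Matrix.conjTranspose_eq_transpose_of_trivial] using (hA x).isHermitian.eq
  have hSs : Sigᵀ = Sig := by
    rw [hSig, Matrix.transpose_sum]
    simp [Matrix.transpose_smul, hAs]
  simp only [specNorm_eq_norm] at hM hV hlam1 ⊢
  have h := weighted_sum_le hpos hP1 hrev hρ0 hρ (fun x => A x - Sig)
    (fun x => by rw [Matrix.transpose_sub, hAs, hSs]) hB hM hV Smat Sig a b x₀
  simp only [add_sub_cancel] at h
  rw [hlam1]
  exact h
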